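/- arXiv:1104.0043 — 2 statements merged into one kernel-verified Lean document; each statement's English description precedes it below -/
import Mathlib

section
/- Let R be a real number and let c be the capacity function of a complete directed 4-node network satisfying R < I*, i.e., for every node i and every two distinct nodes j, k, both different from i, we have c j i + c k i > R. Then at least three of the six unordered pairs {X,Y} of distinct nodes satisfy c X Y + c Y X > R; that is, the set of unordered pairs of distinct nodes whose two directed link capacities sum to more than R has cardinality at least 3. -/
/-!
Call a pair of nodes light if its pair sum is at most `R`. Along a cycle, the pair sums of the edges
and the sums of the two capacities entering each vertex from its neighbours add up to the same
total. The latter all exceed `R`, so no cycle consists of light pairs only: the light pairs form a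
forest. On `n` nodes a forest has at most `n - 1` edges, which leaves at least
`n.choose 2 - (n - 1) = (n - 1).choose 2` pairs whose sum exceeds `R`.
-/

section

variable {V α : Type*}

/-- The pair sum capacity of an unordered pair of nodes: the sum of the capacities of the two
directed links between them. On the diagonal it is twice the (meaningless) capacity of a loop. -/
def pairSum [AddCommMagma α] (c : V → V → α) : Sym2 V → α :=
  Sym2.lift ⟨fun x y => c x y + c y x, fun x y => add_comm (c x y) (c y x)⟩

@[simp]
lemma pairSum_mk [AddCommMagma α] (c : V → V → α) (x y : V) :
    pairSum c s(x, y) = c x y + c y x := rfl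

/-- The graph of light pairs: distinct nodes are adjacent when their pair sum capacity is at most
`R`. The forest argument is carried out on this graph, the complement of the one being counted. -/
def lightGraph [AddCommMagma α] [LE α] (R : α) (c : V → V → α) : SimpleGraph V :=
  SimpleGraph.fromEdgeSet {p | pairSum c p ≤ R}

lemma pairSum_le_of_lightGraph_adj [AddCommMagma α] [LE α] {R : α} {c : V → V → α} {x y : V}
    (h : (lightGraph R c).Adj x y) : pairSum c s(x, y) ≤ R :=
  ((SimpleGraph.fromEdgeSet_adj _).mp h).1

lemma sum_pairSum_eq_sum_incoming_of_closed [AddCommMonoid α] (c : V → V → α) {n : ℕ} {v : ℕ → V}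
    (hv : v (n + 1) = v 0) :
    ∑ i ∈ Finset.range (n + 1), pairSum c s(v i, v (i + 1)) =
      ∑ i ∈ Finset.range n, (c (v i) (v (i + 1)) + c (v (i + 2)) (v (i + 1))) +
        (c (v n) (v 0) + c (v 1) (v 0)) := by
  simp only [pairSum_mk, Finset.sum_add_distrib]
  rw [Finset.sum_range_succ, Finset.sum_range_succ' (fun i => c (v (i + 1)) (v i)), hv,
    add_add_add_comm]

section Ordered

variable [AddCommMonoid α] [LinearOrder α] [IsOrderedCancelAddMonoid α] {R : α} {c : V → V → α}

lemma length_nsmul_lt_sum_pairSum_of_isCycle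
    (hI : ∀ i j k : V, j ≠ i → k ≠ i → j ≠ k → R < c j i + c k i)
    {G : SimpleGraph V} {u : V} {p : G.Walk u u} (hp : p.IsCycle) :
    p.length • R <
      ∑ i ∈ Finset.range p.length, pairSum c s(p.getVert i, p.getVert (i + 1)) := by
  obtain ⟨n, hn⟩ := Nat.exists_eq_add_one.mpr (three_pos.trans_le hp.three_le_length)
  have hclosed : p.getVert (n + 1) = p.getVert 0 := by
    rw [← hn, p.getVert_length, p.getVert_zero]
  have hadj {i : ℕ} (hi : i ≤ n) : G.Adj (p.getVert i) (p.getVert (i + 1)) :=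
    p.adj_getVert_succ (by lia)
  have hinner : ∀ i ∈ Finset.range n,
      R ≤ c (p.getVert i) (p.getVert (i + 1)) + c (p.getVert (i + 2)) (p.getVert (i + 1)) := by
    intro i hi
    have hin : i < n := Finset.mem_range.mp hi
    exact (hI _ _ _ (hadj hin.le).ne (hadj hin).ne'
      (hp.getVert_sub_one_ne_getVert_add_one (i := i + 1) (by lia))).le
  have hbase : R < c (p.getVert n) (p.getVert 0) + c (p.getVert 1) (p.getVert 0) := by
    have hlast : p.penultimate = p.getVert n := congrArg p.getVert (Nat.sub_eq_of_eq_add hn)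
    exact hI _ _ _ (hclosed ▸ (hadj le_rfl).ne) (hadj n.zero_le).ne'
      (hlast ▸ hp.snd_ne_penultimate.symm)
  rw [hn, sum_pairSum_eq_sum_incoming_of_closed c hclosed, succ_nsmul]
  refine add_lt_add_of_le_of_lt ?_ hbase
  simpa only [Finset.card_range] using Finset.card_nsmul_le_sum _ _ _ hinner

lemma isAcyclic_lightGraph (hI : ∀ i j k : V, j ≠ i → k ≠ i → j ≠ k → R < c j i + c k i) :
    (lightGraph R c).IsAcyclic := by
  intro u p hp
  refine (length_nsmul_lt_sum_pairSum_of_isCycle hI hp).not_ge ?_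
  have hlight : ∀ i ∈ Finset.range p.length,
      pairSum c s(p.getVert i, p.getVert (i + 1)) ≤ R := fun i hi =>
    pairSum_le_of_lightGraph_adj (p.adj_getVert_succ (Finset.mem_range.mp hi))
  simpa only [Finset.card_range] using Finset.sum_le_card_nsmul _ _ _ hlight

end Ordered

lemma card_edgeFinset_add_one_le_of_isAcyclic [Fintype V] [Nonempty V] {G : SimpleGraph V}
    [Fintype G.edgeSet] (hG : G.IsAcyclic) : G.edgeFinset.card + 1 ≤ Fintype.card V := by
  classical
  obtain ⟨T, hGT, -, hT⟩ :=
    SimpleGraph.connected_top.exists_isTree_le_of_le_of_isAcyclic le_top hG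
  rw [← hT.card_edgeFinset]
  exact Nat.add_le_add_right (Finset.card_le_card (SimpleGraph.edgeFinset_mono hGT)) 1

lemma card_filter_add_card_edgeFinset_lightGraph [Fintype V] [AddCommMagma α] [LinearOrder α]
    (R : α) (c : V → V → α) [DecidablePred fun p : Sym2 V => ¬ p.IsDiag ∧ R < pairSum c p]
    [Fintype (lightGraph R c).edgeSet] :
    (Finset.univ.filter fun p : Sym2 V => ¬ p.IsDiag ∧ R < pairSum c p).card +
      (lightGraph R c).edgeFinset.card = (Fintype.card V).choose 2 := by
  classical
  let pairs : Finset (Sym2 V) := Finset.univ.filter fun p => ¬ p.IsDiag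
  have hpairs : pairs.card = (Fintype.card V).choose 2 := by
    rw [← Sym2.card_subtype_not_diag, Fintype.card_subtype]
  have hheavy : (Finset.univ.filter fun p : Sym2 V => ¬ p.IsDiag ∧ R < pairSum c p) =
      pairs.filter fun p => R < pairSum c p := by
    ext p
    simp [pairs]
  have hlight : (lightGraph R c).edgeFinset = pairs.filter fun p => ¬ R < pairSum c p := by
    ext p
    rw [SimpleGraph.mem_edgeFinset, lightGraph, SimpleGraph.edgeSet_fromEdgeSet]
    simp [pairs, and_comm]
  rw [hheavy, hlight, Finset.card_filter_add_card_filter_not, hpairs]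

theorem at_least_three_pairs_exceed_general [Fintype V] [AddCommMonoid α] [LinearOrder α]
    [IsOrderedCancelAddMonoid α] (R : α) (c : V → V → α)
    [DecidablePred fun p : Sym2 V => ¬ p.IsDiag ∧ R < pairSum c p]
    (hI : ∀ i j k : V, j ≠ i → k ≠ i → j ≠ k → R < c j i + c k i) :
    (Fintype.card V - 1).choose 2 ≤
      (Finset.univ.filter fun p : Sym2 V => ¬ p.IsDiag ∧ R < pairSum c p).card := by
  classical
  cases isEmpty_or_nonempty V with
  | inl hV => simp
  | inr hV =>
    have hforest := card_edgeFinset_add_one_le_of_isAcyclic (isAcyclic_lightGraph hI)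
    have hcount := card_filter_add_card_edgeFinset_lightGraph R c
    obtain ⟨n, hn⟩ := Nat.exists_eq_add_one.mpr (Fintype.card_pos (α := V))
    rw [hn, Nat.choose_succ_succ', Nat.choose_one_right] at hcount
    rw [hn, Nat.add_sub_cancel]
    lia

end

open Classical in
/-- If `R < I*` in a complete directed 4-node network, then at least three of the six
unordered pairs of distinct nodes have pair sum capacity exceeding `R`. -/
theorem at_least_three_pairs_exceed
    (R : ℝ) (c : Fin 4 → Fin 4 → ℝ)
    (hI : ∀ i j k : Fin 4, j ≠ i → k ≠ i → j ≠ k → c j i + c k i > R) :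
    3 ≤ (Finset.univ.filter
      (fun p : Sym2 (Fin 4) =>
        ¬ p.IsDiag ∧
          R < Sym2.lift ⟨fun x y => c x y + c y x, fun x y => by ring⟩ p)).card :=
  at_least_three_pairs_exceed_general R c hI
end

section
/- Let R be a real number and let c be the capacity function of a complete directed 4-node network satisfying R < I*, i.e., for every node i and every two distinct nodes j, k, both different from i, we have c j i + c k i > R. Then there exist three pairwise distinct nodes X, Y, Z such that c X Y + c Y X > R and c X Z + c Z X > R. -/
/-!
Going once around a cycle of nodes, the pair sum capacities of its links add up to the sum, over
the nodes of the cycle, of the two incoming capacities from the neighbours on the cycle. The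
latter exceeds `R` at every node, so every cycle of length at least three contains a pair whose
sum capacity exceeds `R`. Among four nodes this gives one such pair `{x, y}`; with `z, w` the
other two nodes, each link of the 4-cycle `x z y w` meets `{x, y}` in exactly one node, so a
second pair found on that cycle shares a node with the first.
-/

variable {V M : Type*} [AddCommMonoid M]

theorem sum_pair_eq_sum_incoming {ι : Type*} [Fintype ι] (d : ι → ι → M) (σ : Equiv.Perm ι) :
    ∑ i, (d i (σ i) + d (σ i) i) = ∑ i, (d (σ.symm i) i + d (σ i) i) := by
  have reindex : ∑ i, d i (σ i) = ∑ i, d (σ.symm i) i := by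
    simpa only [Equiv.symm_apply_apply] using Equiv.sum_comp σ fun i => d (σ.symm i) i
  rw [Finset.sum_add_distrib, reindex, ← Finset.sum_add_distrib]

variable [LinearOrder M]

/-- The graph of good pairs of a directed network with capacities `c`: distinct nodes `x`, `y` are
adjacent when the pair sum capacity `c x y + c y x` exceeds `R`. Loops are excluded, so the values
`c x x` play no role. -/
def goodPairGraph (R : M) (c : V → V → M) : SimpleGraph V where
  Adj x y := x ≠ y ∧ R < c x y + c y x
  symm := ⟨fun x y h => ⟨h.1.symm, add_comm (c x y) (c y x) ▸ h.2⟩⟩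
  loopless := ⟨fun _ h => h.1 rfl⟩

theorem exists_goodPairGraph_adj_apply_perm [IsOrderedCancelAddMonoid M] {R : M} {c : V → V → M}
    (hI : ∀ i j k : V, j ≠ i → k ≠ i → j ≠ k → R < c j i + c k i)
    {ι : Type*} [Finite ι] [Nonempty ι] (v : ι ↪ V) (σ : Equiv.Perm ι)
    (hσ : ∀ i, σ (σ i) ≠ i) :
    ∃ i, (goodPairGraph R c).Adj (v i) (v (σ i)) := by
  cases nonempty_fintype ι
  have apply_ne (i : ι) : σ i ≠ i := fun h => hσ i (by rw [h, h])
  have symm_ne (i : ι) : σ.symm i ≠ i := fun h => apply_ne i (σ.symm_apply_eq.mp h).symm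
  have symm_ne_apply (i : ι) : σ.symm i ≠ σ i := fun h => hσ i (σ.symm_apply_eq.mp h).symm
  have incoming (i : ι) : R < c (v (σ.symm i)) (v i) + c (v (σ i)) (v i) :=
    hI _ _ _ (v.injective.ne (symm_ne i)) (v.injective.ne (apply_ne i))
      (v.injective.ne (symm_ne_apply i))
  have sum_lt : ∑ _i : ι, R < ∑ i, (c (v i) (v (σ i)) + c (v (σ i)) (v i)) := by
    rw [sum_pair_eq_sum_incoming (fun i j => c (v i) (v j))]
    exact Finset.sum_lt_sum_of_nonempty Finset.univ_nonempty fun i _ => incoming i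
  obtain ⟨i, -, hi⟩ := Finset.exists_lt_of_sum_lt sum_lt
  exact ⟨i, v.injective.ne (apply_ne i).symm, hi⟩

theorem exists_adj_adj_of_forall_fourCycle {G : SimpleGraph V}
    (hG : ∀ v : Fin 4 ↪ V, ∃ i, G.Adj (v i) (v (i + 1))) (v : Fin 4 ↪ V) :
    ∃ x y z, y ≠ z ∧ G.Adj x y ∧ G.Adj x z := by
  obtain ⟨u, h01⟩ : ∃ u : Fin 4 ↪ V, G.Adj (u 0) (u 1) := by
    obtain ⟨i, hi⟩ := hG v
    exact ⟨(Equiv.addLeft i).toEmbedding.trans v, by simpa using hi⟩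
  have u_ne {i j : Fin 4} (hij : i ≠ j) : u i ≠ u j := u.injective.ne hij
  have crossing : G.Adj (u 0) (u 2) ∨ G.Adj (u 2) (u 1) ∨ G.Adj (u 1) (u 3) ∨
      G.Adj (u 3) (u 0) := by
    -- the 4-cycle `u 0, u 2, u 1, u 3` avoids the link `u 0, u 1`
    obtain ⟨i, hi⟩ := hG ((Equiv.swap 1 2).toEmbedding.trans u)
    fin_cases i
    exacts [.inl hi, .inr (.inl hi), .inr (.inr (.inl hi)), .inr (.inr (.inr hi))]
  rcases crossing with h02 | h21 | h13 | h30
  · exact ⟨u 0, u 1, u 2, u_ne (by decide), h01, h02⟩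
  · exact ⟨u 1, u 0, u 2, u_ne (by decide), h01.symm, h21.symm⟩
  · exact ⟨u 1, u 0, u 3, u_ne (by decide), h01.symm, h13⟩
  · exact ⟨u 0, u 1, u 3, u_ne (by decide), h01, h30.symm⟩

theorem exists_two_good_pairs_sharing_node_general [IsOrderedCancelAddMonoid M]
    (v : Fin 4 ↪ V) (R : M) (c : V → V → M)
    (hI : ∀ i j k : V, j ≠ i → k ≠ i → j ≠ k → R < c j i + c k i) :
    ∃ X Y Z : V, X ≠ Y ∧ X ≠ Z ∧ Y ≠ Z ∧ R < c X Y + c Y X ∧ R < c X Z + c Z X := by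
  have fourCycle (u : Fin 4 ↪ V) : ∃ i, (goodPairGraph R c).Adj (u i) (u (i + 1)) :=
    exists_goodPairGraph_adj_apply_perm hI u (Equiv.addRight 1) (by decide)
  obtain ⟨X, Y, Z, hYZ, ⟨hXY, goodXY⟩, ⟨hXZ, goodXZ⟩⟩ :=
    exists_adj_adj_of_forall_fourCycle fourCycle v
  exact ⟨X, Y, Z, hXY, hXZ, hYZ, goodXY, goodXZ⟩

/-- If `R < I*` in a complete directed 4-node network, then there exist three pairwise
distinct nodes `X, Y, Z` such that both pairs `{X,Y}` and `{X,Z}` have pair sum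
capacity exceeding `R`. -/
theorem exists_two_good_pairs_sharing_node
    (R : ℝ) (c : Fin 4 → Fin 4 → ℝ)
    (hI : ∀ i j k : Fin 4, j ≠ i → k ≠ i → j ≠ k → c j i + c k i > R) :
    ∃ X Y Z : Fin 4, X ≠ Y ∧ X ≠ Z ∧ Y ≠ Z ∧
      c X Y + c Y X > R ∧ c X Z + c Z X > R :=
  exists_two_good_pairs_sharing_node_general (.refl _) R c hI
end
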